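/- arXiv:2205.00474 — 7 statements merged into one kernel-verified Lean document; each statement's English description precedes it below -/
import Mathlib

section
/- Consider a horseshoe political system: each of n voters and each of m candidates is assigned a point on the unit circle, and each voter ranks the candidates in strictly increasing order of arc-length distance from the voter's point to the candidates' points (assume that for each voter all distances to distinct candidates are distinct, so there are no ties). Then the resulting preference profile is two-crossing. -/
/-!
Arc-length distance on the circle lies in `[0, π]`, where cosine is strictly decreasing, so a voter
at angle `t` prefers a candidate at angle `a` to one at angle `b` iff
`cos (t - b) < cos (t - a)`. By the sum-to-product formula the difference
`cos (t - a) - cos (t - b)` is `K * sin (t - s)` for constants `K` and `s`, and `s` can be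
normalised to lie in `[0, π)` at the price of changing the sign of `K`
(`exists_cos_sub_cos_eq`). For `t ∈ [0, 2π)` the sign of this expression can only change as `t`
passes `s` or `s + π`. Hence, when the voters are sorted by their angle in `[0, 2π)`, every pair of
candidates switches at most twice, once at each threshold (`numSwitches_le_two`).
-/

open scoped Classical

/-- Number of adjacent "switches" of a predicate along `Fin n`. -/
noncomputable def numSwitches {n : ℕ} (g : Fin n → Prop) : ℕ :=
  (Finset.univ.filter fun i : Fin n =>
    ∃ h : i.val + 1 < n, ¬ (g i ↔ g ⟨i.val + 1, h⟩)).card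

/-- `P` is `k`-crossing with respect to the permutation `σ` of the voters. -/
def kCrossingWrt {n : ℕ} {C : Type*} (k : ℕ)
    (P : Fin n → C → C → Prop) (σ : Equiv.Perm (Fin n)) : Prop :=
  ∀ c c' : C, c ≠ c' → numSwitches (fun i => P (σ i) c c') ≤ k

def IsInterval {n : ℕ} (S : Set (Fin n)) : Prop :=
  S = ∅ ∨ ∃ l r : Fin n, l ≤ r ∧ S = {i | l ≤ i ∧ i ≤ r}

def IsCircularInterval {n : ℕ} (S : Set (Fin n)) : Prop :=
  S = ∅ ∨ (∃ l r : Fin n, l ≤ r ∧ S = {i | l ≤ i ∧ i ≤ r}) ∨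
    (∃ l r : Fin n, l < r ∧ S = {i | i ≤ l ∨ r ≤ i})

/-- `P` is single-interval on the circle induced by `σ`. -/
def SIcircWrt {n : ℕ} {C : Type*} (P : Fin n → C → C → Prop)
    (σ : Equiv.Perm (Fin n)) : Prop :=
  ∀ c c' : C, c ≠ c' → IsCircularInterval {i : Fin n | P (σ i) c c'}

def IsKIntervalUnion {n : ℕ} (k : ℕ) (S : Set (Fin n)) : Prop :=
  ∃ f : Fin k → Set (Fin n), (∀ t, IsInterval (f t)) ∧ S = ⋃ t, f t

def IsKCircularIntervalUnion {n : ℕ} (k : ℕ) (S : Set (Fin n)) : Prop :=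
  ∃ f : Fin k → Set (Fin n), (∀ t, IsCircularInterval (f t)) ∧ S = ⋃ t, f t

/-- `P` is `k`-interval on the circle induced by `σ`. -/
def kIntervalOnCircleWrt {n : ℕ} {C : Type*} (k : ℕ)
    (P : Fin n → C → C → Prop) (σ : Equiv.Perm (Fin n)) : Prop :=
  ∀ c c' : C, c ≠ c' → IsKCircularIntervalUnion k {i : Fin n | P (σ i) c c'}

/-- Consecutive ones property of a binary matrix w.r.t. a row permutation. -/
def C1PWrt {n : ℕ} {J : Type*} (M : Fin n → J → Bool) (σ : Equiv.Perm (Fin n)) : Prop :=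
  ∀ j : J, IsInterval {i : Fin n | M (σ i) j = true}

/-- Circular consecutive ones property w.r.t. a row permutation. -/
def C1PcircWrt {n : ℕ} {J : Type*} (M : Fin n → J → Bool) (σ : Equiv.Perm (Fin n)) : Prop :=
  ∀ j : J, IsCircularInterval {i : Fin n | M (σ i) j = true}

def kC1PWrt {n : ℕ} {J : Type*} (k : ℕ) (M : Fin n → J → Bool) (σ : Equiv.Perm (Fin n)) : Prop :=
  ∀ j : J, IsKIntervalUnion k {i : Fin n | M (σ i) j = true}

def kC1PcircWrt {n : ℕ} {J : Type*} (k : ℕ) (M : Fin n → J → Bool) (σ : Equiv.Perm (Fin n)) : Prop :=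
  ∀ j : J, IsKCircularIntervalUnion k {i : Fin n | M (σ i) j = true}

/-- At most `k` switches per column w.r.t. a row permutation. -/
def kC1PSWWrt {n : ℕ} {J : Type*} (k : ℕ) (M : Fin n → J → Bool) (σ : Equiv.Perm (Fin n)) : Prop :=
  ∀ j : J, numSwitches (fun i => M (σ i) j = true) ≤ k

/-- Majority margin of `c` over `c'` in profile `P`. -/
noncomputable def majorityMargin {n : ℕ} {C : Type*} (P : Fin n → C → C → Prop) (c c' : C) : ℤ :=
  ((Finset.univ.filter fun v : Fin n => P v c c').card : ℤ) -
    ((Finset.univ.filter fun v : Fin n => P v c' c).card : ℤ)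

def Illegal {n : ℕ} {C : Type*} (w : Fin n → C) : Prop :=
  ∃ (a b : C) (i₁ i₂ i₃ i₄ : Fin n), a ≠ b ∧ i₁ < i₂ ∧ i₂ < i₃ ∧ i₃ < i₄ ∧
    w i₁ = a ∧ w i₂ = b ∧ w i₃ = a ∧ w i₄ = b

def Legal {n : ℕ} {C : Type*} (w : Fin n → C) : Prop := ¬ Illegal w

/-- Some occurrence of `a` lies strictly between two occurrences of `b`
(equivalently, strictly between the first and the last occurrence of `b`). -/
def OccBetween {n : ℕ} {C : Type*} (w : Fin n → C) (a b : C) : Prop :=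
  ∃ j i i' : Fin n, w j = a ∧ w i = b ∧ w i' = b ∧ i < j ∧ j < i'

/-- Along a monotone sequence of positions, a predicate that can only change across one of two
thresholds `p` and `q` has at most two switches. -/
lemma numSwitches_le_two {n : ℕ} (g : Fin n → Prop) (t : Fin n → ℝ) (ht : Monotone t) (p q : ℝ)
    (hg : ∀ i j, (p < t i ↔ p < t j) → (q < t i ↔ q < t j) → (g i ↔ g j)) :
    numSwitches g ≤ 2 := by
  -- the indices at which the threshold `r` is passed
  let A : ℝ → Finset (Fin n) := fun r => Finset.univ.filter fun i : Fin n =>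
    ∃ h : i.val + 1 < n, t i ≤ r ∧ r < t ⟨i.val + 1, h⟩
  have hA : ∀ r, (A r).card ≤ 1 := by
    intro r
    have key : ∀ i j : Fin n, i ∈ A r → j ∈ A r → ¬ i < j := by
      intro i j hi hj hij
      obtain ⟨h1, -, h2⟩ := (Finset.mem_filter.1 hi).2
      obtain ⟨-, h3, -⟩ := (Finset.mem_filter.1 hj).2
      have hle : (⟨i.val + 1, h1⟩ : Fin n) ≤ j := Fin.mk_le_of_le_val (Nat.succ_le_of_lt hij)
      linarith [ht hle]
    exact Finset.card_le_one.2 fun i hi j hj =>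
      le_antisymm (not_lt.1 (key j i hj hi)) (not_lt.1 (key i j hi hj))
  have hsub : (Finset.univ.filter fun i : Fin n =>
      ∃ h : i.val + 1 < n, ¬ (g i ↔ g ⟨i.val + 1, h⟩)) ⊆ A p ∪ A q := by
    intro i hi
    obtain ⟨h, hne⟩ := (Finset.mem_filter.1 hi).2
    have hle : t i ≤ t ⟨i.val + 1, h⟩ := ht (Fin.mk_le_of_le_val (Nat.le_succ _))
    have hpass : ∀ r, i ∉ A r → (r < t i ↔ r < t ⟨i.val + 1, h⟩) := by
      intro r hr
      refine ⟨fun h' => h'.trans_le hle, fun h' => ?_⟩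
      by_contra hc
      exact hr (Finset.mem_filter.2 ⟨Finset.mem_univ _, h, not_lt.1 hc, h'⟩)
    by_contra hc
    rw [Finset.mem_union, not_or] at hc
    exact hne (hg _ _ (hpass p hc.1) (hpass q hc.2))
  calc numSwitches g ≤ (A p ∪ A q).card := Finset.card_le_card hsub
    _ ≤ (A p).card + (A q).card := Finset.card_union_le _ _
    _ ≤ 2 := Nat.add_le_add (hA p) (hA q)

lemma cos_dist_coe (t a : ℝ) :
    Real.cos (dist (t : AddCircle (2 * Real.pi)) (a : AddCircle (2 * Real.pi)))
      = Real.cos (t - a) := by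
  rw [dist_eq_norm, ← AddCircle.coe_sub, AddCircle.norm_eq, Real.cos_abs,
    Real.cos_sub_int_mul_two_pi]

lemma dist_mem_Icc_zero_pi (u v : AddCircle (2 * Real.pi)) :
    dist u v ∈ Set.Icc 0 Real.pi := by
  refine ⟨dist_nonneg, ?_⟩
  have h := AddCircle.norm_le_half_period (2 * Real.pi) (x := u - v) Real.two_pi_pos.ne'
  rw [abs_of_pos Real.two_pi_pos] at h
  rw [dist_eq_norm]
  linarith

lemma dist_coe_lt_dist_coe_iff (t a b : ℝ) :
    dist (t : AddCircle (2 * Real.pi)) (a : AddCircle (2 * Real.pi))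
        < dist (t : AddCircle (2 * Real.pi)) (b : AddCircle (2 * Real.pi))
      ↔ 0 < Real.cos (t - a) - Real.cos (t - b) := by
  rw [sub_pos, ← cos_dist_coe t a, ← cos_dist_coe t b]
  exact (Real.strictAntiOn_cos.lt_iff_gt (dist_mem_Icc_zero_pi _ _)
    (dist_mem_Icc_zero_pi _ _)).symm

lemma exists_cos_sub_cos_eq (a b : ℝ) :
    ∃ K s : ℝ, 0 ≤ s ∧ s < Real.pi ∧
      ∀ t, Real.cos (t - a) - Real.cos (t - b) = K * Real.sin (t - s) := by
  let k : ℤ := ⌊(a + b) / 2 / Real.pi⌋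
  refine ⟨-2 * Real.sin ((b - a) / 2) * (-1) ^ k, (a + b) / 2 - k * Real.pi, ?_, ?_, fun t => ?_⟩
  · have := (le_div_iff₀ Real.pi_pos).1 (Int.floor_le ((a + b) / 2 / Real.pi))
    linarith
  · have := (div_lt_iff₀ Real.pi_pos).1 (Int.lt_floor_add_one ((a + b) / 2 / Real.pi))
    linarith
  · have h1 : (t - a + (t - b)) / 2 = t - ((a + b) / 2 - k * Real.pi) - k * Real.pi := by ring
    have h2 : (t - a - (t - b)) / 2 = (b - a) / 2 := by ring
    rw [Real.cos_sub_cos, h1, h2, Real.sin_sub_int_mul_pi]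
    ring

/-- On `[0, 2π)`, the sign of `sin (t - s)` depends only on the side of `s` and of `s + π` on which
`t` lies, as long as the sine does not vanish. -/
lemma sin_sub_pos_iff {s t : ℝ} (hs : 0 ≤ s) (hs' : s < Real.pi) (ht : 0 ≤ t)
    (ht' : t < 2 * Real.pi) (h0 : Real.sin (t - s) ≠ 0) :
    0 < Real.sin (t - s) ↔ s < t ∧ ¬ s + Real.pi < t := by
  constructor
  · intro h
    constructor
    · by_contra hc
      linarith [Real.sin_nonpos_of_nonpos_of_neg_pi_le (x := t - s) (by linarith) (by linarith)]
    · intro hc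
      have h1 : 0 < Real.sin (t - s - Real.pi) :=
        Real.sin_pos_of_pos_of_lt_pi (by linarith) (by linarith)
      rw [Real.sin_sub_pi] at h1
      linarith
  · rintro ⟨h1, h2⟩
    exact lt_of_le_of_ne (Real.sin_nonneg_of_nonneg_of_le_pi (by linarith) (by linarith)) h0.symm

/-- Every point of the circle has an angle in `[0, 2π)`. -/
lemma exists_angle (u : AddCircle (2 * Real.pi)) :
    ∃ t : ℝ, 0 ≤ t ∧ t < 2 * Real.pi ∧ (t : AddCircle (2 * Real.pi)) = u := by
  have : Fact (0 < 2 * Real.pi) := ⟨Real.two_pi_pos⟩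
  have h := (AddCircle.equivIco (2 * Real.pi) 0 u).2
  exact ⟨_, h.1, by simpa using h.2, (AddCircle.equivIco (2 * Real.pi) 0).symm_apply_apply u⟩

/-- In a horseshoe political system (voters and candidates are points on the
unit circle, modelled as `AddCircle (2π)` with arc-length distance, each voter ranking
candidates in increasing order of arc-length distance, with no ties), the resulting
preference profile is two-crossing. -/
theorem horseshoe_is_twoCrossing (n m : ℕ)
    (x : Fin n → AddCircle (2 * Real.pi)) (y : Fin m → AddCircle (2 * Real.pi))
    (hties : ∀ (v : Fin n) (c c' : Fin m), c ≠ c' → dist (x v) (y c) ≠ dist (x v) (y c'))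
    (P : Fin n → Fin m → Fin m → Prop)
    (hP : ∀ v c c', P v c c' ↔ dist (x v) (y c) < dist (x v) (y c')) :
    ∃ σ : Equiv.Perm (Fin n), kCrossingWrt 2 P σ := by
  choose t ht0 ht1 htx using fun v => exists_angle (x v)
  refine ⟨Tuple.sort t, fun c c' hcc => ?_⟩
  obtain ⟨a, -, -, ha⟩ := exists_angle (y c)
  obtain ⟨b, -, -, hb⟩ := exists_angle (y c')
  obtain ⟨K, s, hs, hs', hK⟩ := exists_cos_sub_cos_eq a b
  have hpref : ∀ v, P v c c' ↔ 0 < K * Real.sin (t v - s) := by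
    intro v
    rw [hP, ← htx v, ← ha, ← hb, dist_coe_lt_dist_coe_iff, hK]
  have hne : ∀ v, K * Real.sin (t v - s) ≠ 0 := by
    -- otherwise neither candidate is strictly closer, which is a tie
    intro v h
    refine hties v c c' hcc (le_antisymm (not_lt.1 fun hlt => ?_) (not_lt.1 fun hlt => ?_))
    · rw [← htx v, ← ha, ← hb, dist_coe_lt_dist_coe_iff] at hlt
      linarith [hK (t v)]
    · rw [← htx v, ← ha, ← hb, dist_coe_lt_dist_coe_iff] at hlt
      linarith [hK (t v)]
  have hsin : ∀ v, 0 < Real.sin (t v - s) ↔ s < t v ∧ ¬ s + Real.pi < t v := fun v =>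
    sin_sub_pos_iff hs hs' (ht0 v) (ht1 v) (right_ne_zero_of_mul (hne v))
  refine numSwitches_le_two _ (t ∘ Tuple.sort t) (Tuple.monotone_sort t) s (s + Real.pi) ?_
  intro i j h1 h2
  simp only [Function.comp_apply] at h1 h2
  have hij : 0 < Real.sin (t (Tuple.sort t i) - s) ↔ 0 < Real.sin (t (Tuple.sort t j) - s) := by
    rw [hsin, hsin, h1, h2]
  have hneg : ∀ v, Real.sin (t v - s) < 0 ↔ ¬ 0 < Real.sin (t v - s) := fun v =>
    ⟨fun h => h.le.not_gt, fun h => lt_of_le_of_ne (not_lt.1 h) (right_ne_zero_of_mul (hne v))⟩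
  rw [hpref, hpref, mul_pos_iff, mul_pos_iff, hneg, hneg, hij]
end

section
/- Let M be an n×m binary matrix and let M^c be obtained from M by flipping zeros and ones in exactly those columns that have a one in the first row of M. Then for any permutation σ of the rows that fixes the first row (σ_1 = 1): σ witnesses that M has the circular consecutive ones property if and only if σ witnesses that M^c has the consecutive ones property. -/
/-!
The claim is checked column by column. Let `S` be the set of positions of the ones in a column of
the permuted matrix; since `σ` fixes the first row, `0 ∈ S` says exactly that the column is flipped.
If `0 ∉ S`, a circular interval cannot wrap around, so it is an ordinary interval
(`isCircularInterval_iff_of_zero_notMem`). If `0 ∈ S`, the complement of `S` avoids `0`, and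
complementation matches circular intervals containing `0` with intervals avoiding `0`
(`isCircularInterval_iff_compl_of_zero_mem`).
-/

open scoped Classical

lemma isCircularInterval_iff_of_zero_notMem {n : ℕ} {S : Set (Fin (n + 1))} (h0 : 0 ∉ S) :
    IsCircularInterval S ↔ IsInterval S := by
  constructor
  · rintro (h | h | ⟨l, r, -, rfl⟩)
    · exact Or.inl h
    · exact Or.inr h
    · exact absurd (Or.inl (Fin.zero_le l)) h0
  · rintro (h | h)
    · exact Or.inl h
    · exact Or.inr (Or.inl h)

/-- The complement of `{i | i ≤ l ∨ r ≤ i}` is the interval from `l + 1` to `r - 1`. The cases to be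
treated apart are `S` being everything, where the complement is empty, and `S` being an initial
segment, which does not wrap around. -/
lemma isCircularInterval_iff_compl_of_zero_mem {n : ℕ} {S : Set (Fin (n + 1))} (h0 : 0 ∈ S) :
    IsCircularInterval S ↔ IsInterval Sᶜ := by
  constructor
  · rintro (rfl | ⟨l, r, -, rfl⟩ | ⟨l, r, hlr, rfl⟩)
    · exact absurd h0 (Set.notMem_empty 0)
    · have hl : l.val = 0 := by
        have h := h0.1
        rw [Fin.le_def] at h
        simpa using h
      by_cases hr : r.val = n
      · left
        ext i
        simp only [Set.mem_compl_iff, Set.mem_ofPred_eq, Set.mem_empty_iff_false, Fin.le_def, iff_false]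
        omega
      · right
        refine ⟨⟨r.val + 1, by omega⟩, Fin.last n, Fin.le_last _, ?_⟩
        ext i
        simp only [Set.mem_compl_iff, Set.mem_ofPred_eq, Fin.le_def, Fin.val_last]
        omega
    · rw [Fin.lt_def] at hlr
      by_cases hr : r.val = l.val + 1
      · left
        ext i
        simp only [Set.mem_compl_iff, Set.mem_ofPred_eq, Set.mem_empty_iff_false, Fin.le_def, iff_false]
        omega
      · right
        refine ⟨⟨l.val + 1, by omega⟩, ⟨r.val - 1, by omega⟩, ?_, ?_⟩
        · simp only [Fin.le_def]
          omega
        · ext i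
          simp only [Set.mem_compl_iff, Set.mem_ofPred_eq, Fin.le_def]
          omega
  · rintro (h | ⟨l, r, hlr, h⟩)
    · refine Or.inr (Or.inl ⟨0, Fin.last n, Fin.zero_le _, ?_⟩)
      rw [Set.compl_empty_iff.mp h]
      ext i
      simp [Fin.le_last]
    · rw [Fin.le_def] at hlr
      have hS : S = {i | l ≤ i ∧ i ≤ r}ᶜ := by rw [← h, compl_compl]
      have hl : l.val ≠ 0 := by
        intro hl
        rw [hS] at h0
        apply h0
        simp only [Set.mem_ofPred_eq, Fin.le_def, Fin.val_zero]
        omega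
      subst hS
      by_cases hr : r.val = n
      · refine Or.inr (Or.inl ⟨0, ⟨l.val - 1, by omega⟩, Fin.zero_le _, ?_⟩)
        ext i
        simp only [Set.mem_compl_iff, Set.mem_ofPred_eq, Fin.le_def, Fin.val_zero]
        omega
      · refine Or.inr (Or.inr ⟨⟨l.val - 1, by omega⟩, ⟨r.val + 1, by omega⟩, ?_, ?_⟩)
        · simp only [Fin.lt_def]
          omega
        · ext i
          simp only [Set.mem_compl_iff, Set.mem_ofPred_eq, Fin.le_def]
          omega

/-- Flipping the columns of `M` that have a one in the first row, any
row permutation fixing the first row witnesses circular C1P for `M` iff it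
witnesses C1P for the flipped matrix `Mᶜ`. -/
theorem c1pCirc_iff_c1p_of_flip_first_row {n m : ℕ}
    (M : Fin (n + 1) → Fin m → Bool)
    (Mc : Fin (n + 1) → Fin m → Bool)
    (hMc : ∀ i j, Mc i j = if M 0 j = true then !(M i j) else M i j)
    (σ : Equiv.Perm (Fin (n + 1))) (hσ : σ 0 = 0) :
    C1PcircWrt M σ ↔ C1PWrt Mc σ := by
  refine forall_congr' fun j => ?_
  by_cases hj : M 0 j = true
  · have hc : {i | Mc (σ i) j = true} = {i | M (σ i) j = true}ᶜ := by
      ext i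
      simp [hMc, hj]
    rw [hc]
    exact isCircularInterval_iff_compl_of_zero_mem (by simpa [hσ] using hj)
  · have hc : {i | Mc (σ i) j = true} = {i | M (σ i) j = true} := by
      ext i
      simp [hMc, hj]
    rw [hc]
    exact isCircularInterval_iff_of_zero_notMem (by simpa [hσ] using hj)
end

section
/- Let M be an n×m binary matrix and let M^c be obtained from M by flipping zeros and ones in exactly those columns that have a one in the first row of M. Then M has the circular consecutive ones property with respect to some permutation of its rows if and only if M^c has the consecutive ones property with respect to some permutation of its rows. -/
/-!
Circular intervals of `Fin (n + 1)` are closed under complement and under rotation, whereas a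
circular interval that avoids the point `0` cannot wrap around and is therefore an interval.

If `M` is circular with respect to `σ`, rotate `σ` so that the first row of `M` comes first.
Every column remains a circular interval, also after complementing it, and every column of `Mc`
has a zero in the first row; hence every column of `Mc` is an interval. Conversely, each column
of `M` is a column of `Mc` or the complement of one, so the same permutation works for `M`.
-/

open scoped Classical

/-- A nonempty circular interval is an arc: all points reached from a start `a` in at most `k`
cyclic steps. Cyclic subtraction in `Fin (n + 1)` makes this form visibly rotation invariant. -/
lemma isCircularInterval_iff_arc {n : ℕ} (S : Set (Fin (n + 1))) :
    IsCircularInterval S ↔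
      S = ∅ ∨ ∃ (a : Fin (n + 1)) (k : ℕ), S = {i | (i - a).val ≤ k} := by
  have hsub (i a : Fin (n + 1)) : (a ≤ i ∧ (i - a).val = i.val - a.val) ∨
      (i < a ∧ (i - a).val = n + 1 + i.val - a.val) := by
    rcases le_or_gt a i with h | h
    · exact Or.inl ⟨h, Fin.sub_val_of_le h⟩
    · exact Or.inr ⟨h, Fin.coe_sub_iff_lt.2 h⟩
  constructor
  · rintro (rfl | ⟨l, r, hlr, rfl⟩ | ⟨l, r, hlr, rfl⟩)
    · exact Or.inl rfl
    · refine Or.inr ⟨l, r.val - l.val, ?_⟩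
      ext i
      have := hsub i l
      simp only [Set.mem_ofPred_eq]
      omega
    · refine Or.inr ⟨r, n + 1 + l.val - r.val, ?_⟩
      ext i
      have := hsub i r
      simp only [Set.mem_ofPred_eq]
      omega
  · rintro (rfl | ⟨a, k, rfl⟩)
    · exact Or.inl rfl
    · by_cases hk : n ≤ k
      · -- the arc is the whole circle
        refine Or.inr (Or.inl ⟨0, Fin.last n, Fin.zero_le _, ?_⟩)
        ext i
        simp only [Set.mem_ofPred_eq, Fin.zero_le, Fin.le_last, and_self, iff_true]
        omega
      by_cases hak : a.val + k ≤ n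
      · refine Or.inr (Or.inl ⟨a, ⟨a.val + k, by omega⟩, ?_, ?_⟩)
        · simp [Fin.le_def]
        · ext i
          have := hsub i a
          simp only [Set.mem_ofPred_eq, Fin.le_def, Fin.lt_def] at *
          omega
      · -- the arc wraps around, ending at `a + k` reduced modulo `n + 1`
        refine Or.inr (Or.inr ⟨⟨a.val + k - (n + 1), by omega⟩, a, ?_, ?_⟩)
        · simp only [Fin.lt_def]
          omega
        · ext i
          have := hsub i a
          simp only [Set.mem_ofPred_eq, Fin.le_def, Fin.lt_def] at *
          omega

lemma IsCircularInterval.rotate {n : ℕ} {S : Set (Fin (n + 1))} (hS : IsCircularInterval S)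
    (p : Fin (n + 1)) : IsCircularInterval {i | i + p ∈ S} := by
  rw [isCircularInterval_iff_arc] at hS ⊢
  rcases hS with rfl | ⟨a, k, rfl⟩
  · exact Or.inl rfl
  · refine Or.inr ⟨a - p, k, ?_⟩
    ext i
    simp only [Set.mem_ofPred_eq, sub_sub_eq_add_sub]

lemma IsCircularInterval.compl {n : ℕ} {S : Set (Fin (n + 1))} (hS : IsCircularInterval S) :
    IsCircularInterval Sᶜ := by
  rcases hS with rfl | ⟨l, r, hlr, rfl⟩ | ⟨l, r, hlr, rfl⟩
  · refine Or.inr (Or.inl ⟨0, Fin.last n, Fin.zero_le _, ?_⟩)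
    ext i
    simp [Fin.le_last]
  · by_cases hl : l.val = 0
    · by_cases hr : r.val = n
      · left
        ext i
        simp only [Set.mem_compl_iff, Set.mem_ofPred_eq, Set.mem_empty_iff_false, iff_false, Fin.le_def]
        omega
      · refine Or.inr (Or.inl ⟨⟨r.val + 1, by omega⟩, Fin.last n, Fin.le_last _, ?_⟩)
        ext i
        simp only [Set.mem_compl_iff, Set.mem_ofPred_eq, Fin.le_def, Fin.val_last]
        omega
    · by_cases hr : r.val = n
      · refine Or.inr (Or.inl ⟨0, ⟨l.val - 1, by omega⟩, Fin.zero_le _, ?_⟩)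
        ext i
        simp only [Set.mem_compl_iff, Set.mem_ofPred_eq, Fin.le_def, Fin.val_zero]
        omega
      · refine Or.inr (Or.inr ⟨⟨l.val - 1, by omega⟩, ⟨r.val + 1, by omega⟩, ?_, ?_⟩)
        · simp only [Fin.lt_def, Fin.le_def] at *
          omega
        · ext i
          simp only [Set.mem_compl_iff, Set.mem_ofPred_eq, Fin.le_def]
          omega
  · by_cases h : l.val + 1 = r.val
    · left
      ext i
      simp only [Set.mem_compl_iff, Set.mem_ofPred_eq, Set.mem_empty_iff_false, iff_false, Fin.le_def]
      omega
    · refine Or.inr (Or.inl ⟨⟨l.val + 1, by omega⟩, ⟨r.val - 1, by omega⟩, ?_, ?_⟩)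
      · simp only [Fin.le_def] at *
        omega
      · ext i
        simp only [Set.mem_compl_iff, Set.mem_ofPred_eq, Fin.le_def]
        omega

lemma IsInterval.isCircularInterval {n : ℕ} {S : Set (Fin n)} (hS : IsInterval S) :
    IsCircularInterval S :=
  hS.imp id Or.inl

lemma IsCircularInterval.isInterval_of_zero_notMem {n : ℕ} {S : Set (Fin (n + 1))}
    (hS : IsCircularInterval S) (h0 : (0 : Fin (n + 1)) ∉ S) : IsInterval S := by
  rcases hS with h | h | ⟨l, r, -, rfl⟩
  · exact Or.inl h
  · exact Or.inr h
  · exact absurd (Or.inl (Fin.zero_le l)) h0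

/-- `M` has the circular consecutive ones property (for some row
permutation) iff the flipped matrix `Mᶜ` has the consecutive ones property
(for some row permutation). -/
theorem c1pCirc_iff_c1p_flip {n m : ℕ}
    (M : Fin (n + 1) → Fin m → Bool)
    (Mc : Fin (n + 1) → Fin m → Bool)
    (hMc : ∀ i j, Mc i j = if M 0 j = true then !(M i j) else M i j) :
    (∃ σ : Equiv.Perm (Fin (n + 1)), C1PcircWrt M σ) ↔
      (∃ σ : Equiv.Perm (Fin (n + 1)), C1PWrt Mc σ) := by
  constructor
  · rintro ⟨σ, hσ⟩
    -- rotate so that row `0` comes first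
    refine ⟨(Equiv.addRight (σ.symm 0)).trans σ, fun j => ?_⟩
    have hrot := (hσ j).rotate (σ.symm 0)
    refine IsCircularInterval.isInterval_of_zero_notMem ?_ ?_
    · by_cases h : M 0 j = true
      · convert hrot.compl using 1
        ext i
        simp [hMc, h]
      · convert hrot using 1
        ext i
        simp [hMc, h]
    · cases h : M 0 j <;> simp [hMc, h]
  · rintro ⟨σ, hσ⟩
    refine ⟨σ, fun j => ?_⟩
    have hcol := (hσ j).isCircularInterval
    by_cases h : M 0 j = true
    · convert hcol.compl using 1
      ext i
      simp [hMc, h]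
    · convert hcol using 1
      ext i
      simp [hMc, h]
end

section
/- An n×m binary matrix M has the consecutive ones property with respect to some permutation of its rows if and only if the (n+1)×m matrix obtained from M by appending an extra all-zero row has the circular consecutive ones property with respect to some permutation of its rows. -/
/-!
Reading the rows circularly, the appended zero row marks a place where no column's run of ones
can pass. Rotating the circle so that this row comes last therefore turns every circular run into
an ordinary run among the remaining `n` rows (`isInterval_rotate_of_notMem`). Conversely, an
interval of the first `n` positions is still an interval, hence a circular one, after an
empty last position is added (`isCircularInterval_of_castSucc`). The rest of the proof passes
between permutations of `Fin n` and permutations of `Fin (n + 1)`, where the rotated permutation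
fixes the last element.
-/

open scoped Classical

/-- Cutting the circle `Fin (n + 1)` at a point `p` outside a circular interval leaves an interval:
position `i` of the cut circle is the `(i + 1)`-st point after `p`. -/
theorem isInterval_rotate_of_notMem {n : ℕ} {S : Set (Fin (n + 1))} (p : Fin (n + 1))
    (hS : IsCircularInterval S) (hp : p ∉ S) :
    IsInterval {i : Fin n | i.castSucc + (p + 1) ∈ S} := by
  have hval : ∀ i : Fin n, (i.castSucc + (p + 1) : Fin (n + 1)).val =
      if i.val + p.val + 1 ≤ n then i.val + p.val + 1 else i.val + p.val - n := by
    intro i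
    have hi := i.isLt
    have hpn := p.isLt
    have h1 : (i.castSucc + (p + 1) : Fin (n + 1)).val = (i.val + p.val + 1) % (n + 1) := by
      simp [Fin.val_add, add_assoc]
    rw [h1]
    split_ifs with h
    · exact Nat.mod_eq_of_lt (by omega)
    · rw [Nat.mod_eq_sub_mod (by omega), Nat.mod_eq_of_lt (by omega)]
      omega
  have hpn := p.isLt
  rcases hS with rfl | ⟨l, r, hlr, rfl⟩ | ⟨l, r, hlr, rfl⟩
  · left
    simp
  · have hl := l.isLt
    have hr := r.isLt
    simp only [Set.mem_ofPred_eq, Fin.le_def] at hp hlr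
    right
    by_cases hpl : p.val < l.val
    · refine ⟨⟨l - p - 1, by omega⟩, ⟨r - p - 1, by omega⟩, ?_, ?_⟩
      · simp only [Fin.le_def]
        omega
      · ext i
        have hi := i.isLt
        simp only [Set.mem_ofPred_eq, Fin.le_def, hval]
        split_ifs <;> omega
    · refine ⟨⟨l + n - p, by omega⟩, ⟨r + n - p, by omega⟩, ?_, ?_⟩
      · simp only [Fin.le_def]
        omega
      · ext i
        have hi := i.isLt
        simp only [Set.mem_ofPred_eq, Fin.le_def, hval]
        split_ifs <;> omega
  · have hl := l.isLt
    have hr := r.isLt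
    simp only [Set.mem_ofPred_eq, Fin.le_def] at hp
    right
    refine ⟨⟨r - p - 1, by omega⟩, ⟨l + n - p, by omega⟩, ?_, ?_⟩
    · simp only [Fin.le_def]
      omega
    · ext i
      have hi := i.isLt
      simp only [Set.mem_ofPred_eq, Fin.le_def, hval]
      split_ifs <;> omega

theorem isCircularInterval_of_castSucc {n : ℕ} {S : Set (Fin (n + 1))}
    (hS : IsInterval {i : Fin n | i.castSucc ∈ S}) (hlast : Fin.last n ∉ S) :
    IsCircularInterval S := by
  rcases hS with h | ⟨l, r, hlr, h⟩
  · left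
    ext i
    induction i using Fin.lastCases with
    | last => simpa using hlast
    | cast i => simpa using Set.ext_iff.mp h i
  · right
    left
    refine ⟨l.castSucc, r.castSucc, by simpa using hlr, ?_⟩
    ext i
    induction i using Fin.lastCases with
    | last => simp [hlast, Fin.le_def]
    | cast i => simpa using Set.ext_iff.mp h i

/-- Every permutation of `Fin n` extends to one of `Fin (n + 1)` fixing the last element. -/
theorem exists_perm_extend_last {n : ℕ} (σ : Equiv.Perm (Fin n)) :
    ∃ τ : Equiv.Perm (Fin (n + 1)), τ (Fin.last n) = Fin.last n ∧
      ∀ i, τ (Fin.castSucc i) = Fin.castSucc (σ i) := by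
  let f : Fin (n + 1) → Fin (n + 1) :=
    Fin.snoc (α := fun _ => Fin (n + 1)) (fun i => (σ i).castSucc) (Fin.last n)
  have hl : f (Fin.last n) = Fin.last n := by simp [f]
  have hc : ∀ i : Fin n, f i.castSucc = (σ i).castSucc := fun i => by simp [f]
  have hf : Function.Injective f := by
    intro a b
    induction a using Fin.lastCases <;> induction b using Fin.lastCases <;>
      simp [hl, hc, Fin.castSucc_ne_last, (Fin.castSucc_ne_last _).symm]
  exact ⟨Equiv.ofBijective f (Finite.injective_iff_bijective.mp hf), hl, hc⟩

/-- A permutation of `Fin (n + 1)` fixing the last element restricts to one of `Fin n`. -/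
theorem exists_perm_restrict_last {n : ℕ} (τ : Equiv.Perm (Fin (n + 1)))
    (hτ : τ (Fin.last n) = Fin.last n) :
    ∃ σ : Equiv.Perm (Fin n), ∀ i, τ (Fin.castSucc i) = Fin.castSucc (σ i) := by
  have h : ∀ i : Fin n, ∃ k : Fin n, k.castSucc = τ i.castSucc := by
    intro i
    rw [Fin.exists_castSucc_eq]
    intro hi
    exact Fin.castSucc_ne_last i (τ.injective (hi.trans hτ.symm))
  choose f hf using h
  have hinj : Function.Injective f := by
    intro a b hab
    apply Fin.castSucc_injective n
    apply τ.injective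
    rw [← hf, ← hf, hab]
  exact ⟨Equiv.ofBijective f (Finite.injective_iff_bijective.mp hinj), fun i => (hf i).symm⟩

/-- `M` has the consecutive ones property for some row permutation iff
the matrix obtained by appending an all-zero row has the circular consecutive
ones property for some row permutation. -/
theorem c1p_iff_c1pCirc_snoc_zero_row {n m : ℕ} (M : Fin n → Fin m → Bool) :
    (∃ σ : Equiv.Perm (Fin n), C1PWrt M σ) ↔
      (∃ σ : Equiv.Perm (Fin (n + 1)),
        C1PcircWrt (Fin.snoc M (fun _ => false) : Fin (n + 1) → Fin m → Bool) σ) := by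
  constructor
  · rintro ⟨σ, hσ⟩
    obtain ⟨τ, hl, hc⟩ := exists_perm_extend_last σ
    refine ⟨τ, fun j => isCircularInterval_of_castSucc ?_ ?_⟩
    · simpa [hc] using hσ j
    · simp [hl]
  · rintro ⟨σ, hσ⟩
    -- `p` is the position of the zero row; rotating by `p + 1` moves it to the last position.
    let p : Fin (n + 1) := σ.symm (Fin.last n)
    have hp : Fin.last n + (p + 1) = p := by
      rw [add_comm p 1, ← add_assoc, Fin.last_add_one, zero_add]
    obtain ⟨τ, hτ⟩ := exists_perm_restrict_last ((Equiv.addRight (p + 1)).trans σ) (by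
      simp only [Equiv.trans_apply, Equiv.coe_addRight, hp]
      exact σ.apply_symm_apply _)
    refine ⟨τ, fun j => ?_⟩
    have h := isInterval_rotate_of_notMem p (hσ j) (by simp [p])
    simp only [Equiv.trans_apply, Equiv.coe_addRight] at hτ
    simpa [hτ] using h
end

section
/- Let P be a profile over m candidates with voters [n] and let M_P be the n×m(m−1) binary matrix with one row per voter v and one column per ordered pair of distinct candidates (c,c'), whose entry is 1 if c ≻_v c' and 0 otherwise. Then P is two-crossing if and only if M_P has the circular consecutive ones property. -/
/-! The two properties agree permutation by permutation: a predicate on `Fin n` switches at most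
twice along the line exactly when its truth set is a circular interval.

A circular interval can only switch at its two end points, which bounds the number of switches by
two (`numSwitches_le_two`). Conversely, a predicate with at most two switches admits no alternating
chain `a < b < c < d`, since each of the three steps contains a switch (`no_alternation`). If it
fails at position `0`, its truth set must therefore be everything between its least and greatest
element (`isInterval_of_not_zero`). If it holds at `0`, the same argument applied to the negation,
which has the same switches, shows that the complement is an interval, so the set itself is a
circular interval. -/

open scoped Classical

/-- A predicate that differs at `a < b` switches somewhere in `[a, b)`. -/
lemma exists_switch {n : ℕ} (g : Fin n → Prop) (a b : Fin n) (hab : a < b)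
    (h : ¬ (g a ↔ g b)) :
    ∃ i : Fin n, a ≤ i ∧ i < b ∧ ∃ h : i.val + 1 < n, ¬ (g i ↔ g ⟨i.val + 1, h⟩) := by
  by_contra! hc
  have key : ∀ k : ℕ, ∀ hk : k < n, a.val ≤ k → k ≤ b.val → (g a ↔ g ⟨k, hk⟩) := by
    intro k
    induction k with
    | zero =>
      intro hk h1 _
      have : a = ⟨0, hk⟩ := Fin.ext (by simpa using h1)
      rw [this]
    | succ k ih =>
      intro hk h1 h2
      rcases Nat.eq_or_lt_of_le h1 with h3 | h3
      · have : a = ⟨k + 1, hk⟩ := Fin.ext h3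
        rw [this]
      · have := ih (by omega) (by omega) (by omega)
        rw [this]
        exact hc ⟨k, by omega⟩ (Fin.le_def.2 (by simp; omega)) (Fin.lt_def.2 (by simp; omega)) hk
  exact h (key b.val b.isLt hab.le le_rfl)

lemma no_alternation {n : ℕ} (g : Fin n → Prop) (hg : numSwitches g ≤ 2)
    (a b c d : Fin n) (hab : a < b) (hbc : b < c) (hcd : c < d)
    (h1 : ¬ (g a ↔ g b)) (h2 : ¬ (g b ↔ g c)) (h3 : ¬ (g c ↔ g d)) : False := by
  obtain ⟨i, hi, hi', hsi⟩ := exists_switch g a b hab h1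
  obtain ⟨j, hj, hj', hsj⟩ := exists_switch g b c hbc h2
  obtain ⟨k, hk, hk', hsk⟩ := exists_switch g c d hcd h3
  have hij : i < j := hi'.trans_le hj
  have hjk : j < k := hj'.trans_le hk
  have : ({i, j, k} : Finset (Fin n)).card ≤ numSwitches g := by
    apply Finset.card_le_card
    intro x hx
    simp only [Finset.mem_insert, Finset.mem_singleton] at hx
    simp only [Finset.mem_filter, Finset.mem_univ, true_and]
    rcases hx with rfl | rfl | rfl <;> assumption
  rw [Finset.card_eq_three.2 ⟨i, j, k, hij.ne, (hij.trans hjk).ne, hjk.ne, rfl⟩] at this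
  omega

lemma isInterval_of_not_zero {n : ℕ} (g : Fin n → Prop) (hg : numSwitches g ≤ 2)
    (hn : 0 < n) (h0 : ¬ g ⟨0, hn⟩) : IsInterval {i | g i} := by
  rcases Set.eq_empty_or_nonempty {i | g i} with he | hne
  · exact Or.inl he
  · obtain ⟨l, hl, hlmin⟩ := Set.exists_min_image {i | g i} id (Set.toFinite _) hne
    obtain ⟨r, hr, hrmax⟩ := Set.exists_max_image {i | g i} id (Set.toFinite _) hne
    refine Or.inr ⟨l, r, hlmin r hr, ?_⟩
    ext i
    refine ⟨fun hi => ⟨hlmin i hi, hrmax i hi⟩, fun ⟨h1, h2⟩ => ?_⟩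
    by_contra hi
    simp only [Set.mem_ofPred_eq] at hi hl hr
    have hli : l < i := lt_of_le_of_ne h1 (by rintro rfl; exact hi hl)
    have hir : i < r := lt_of_le_of_ne h2 (by rintro rfl; exact hi hr)
    have h0l : (⟨0, hn⟩ : Fin n) < l :=
      lt_of_le_of_ne (Fin.le_def.2 (Nat.zero_le _)) (by rintro rfl; exact h0 hl)
    exact no_alternation g hg _ l i r h0l hli hir (by tauto) (by tauto) (by tauto)

lemma numSwitches_not {n : ℕ} (g : Fin n → Prop) :
    numSwitches (fun i => ¬ g i) = numSwitches g := by
  simp only [numSwitches, not_iff_not]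

/-- If every switch is at position `x` or `y`, there are at most two. Positions are natural numbers,
so that `x` or `y` may be the truncated predecessor of an interval starting at `0`. -/
lemma numSwitches_le_two_s7 {n : ℕ} (g : Fin n → Prop) (x y : ℕ)
    (h : ∀ (i : Fin n) (hi : i.val + 1 < n), ¬ (g i ↔ g ⟨i.val + 1, hi⟩) →
      i.val = x ∨ i.val = y) : numSwitches g ≤ 2 := by
  unfold numSwitches
  rw [← Finset.card_image_of_injective _ Fin.val_injective]
  refine (Finset.card_le_card (t := {x, y}) ?_).trans Finset.card_le_two
  intro k hk
  simp only [Finset.mem_image, Finset.mem_filter, Finset.mem_univ, true_and] at hk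
  obtain ⟨i, ⟨hi, hs⟩, rfl⟩ := hk
  simpa using h i hi hs

lemma numSwitches_le_two_iff {n : ℕ} (g : Fin n → Prop) :
    numSwitches g ≤ 2 ↔ IsCircularInterval {i | g i} := by
  constructor
  · intro hg
    rcases Nat.eq_zero_or_pos n with rfl | hn
    · exact Or.inl (Set.eq_empty_of_forall_notMem fun i => i.elim0)
    by_cases h0 : g ⟨0, hn⟩
    · have hmem := isInterval_of_not_zero (fun i => ¬ g i) (by rwa [numSwitches_not]) hn
        (not_not.2 h0)
      rcases hmem with he | ⟨l, r, hlr, he⟩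
      · -- the complement is empty: the set is the full interval
        refine Or.inr (Or.inl ⟨⟨0, hn⟩, ⟨n - 1, by omega⟩, Fin.le_def.2 (Nat.zero_le _), ?_⟩)
        ext i
        have hi := Set.ext_iff.1 he i
        simp only [Set.mem_ofPred_eq, Set.mem_empty_iff_false, Fin.le_def] at hi ⊢
        have := i.isLt
        constructor
        · intro _; omega
        · intro _; tauto
      · have hi := fun i => Set.ext_iff.1 he i
        simp only [Set.mem_ofPred_eq, Fin.le_def] at hi
        rw [Fin.le_def] at hlr
        -- `0` lies outside the complement `[l, r]`, so `l` has a predecessor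
        have hl : 0 < l.val := by
          by_contra hl
          exact (hi ⟨0, hn⟩).2 ⟨by simp; omega, by simp⟩ h0
        have hg' : ∀ i : Fin n, g i ↔ ¬ (l.val ≤ i.val ∧ i.val ≤ r.val) := fun i => by
          rw [← hi i, not_not]
        by_cases hr : r.val + 1 < n
        · refine Or.inr (Or.inr ⟨⟨l.val - 1, by omega⟩, ⟨r.val + 1, hr⟩,
            Fin.lt_def.2 (by simp; omega), ?_⟩)
          ext i
          simp only [Set.mem_ofPred_eq, hg', Fin.le_def]
          omega
        · refine Or.inr (Or.inl ⟨⟨0, hn⟩, ⟨l.val - 1, by omega⟩,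
            Fin.le_def.2 (Nat.zero_le _), ?_⟩)
          ext i
          have := i.isLt
          simp only [Set.mem_ofPred_eq, hg', Fin.le_def]
          omega
    · rcases isInterval_of_not_zero g hg hn h0 with he | he
      · exact Or.inl he
      · exact Or.inr (Or.inl he)
  · rintro (he | ⟨l, r, hlr, he⟩ | ⟨l, r, hlr, he⟩)
    all_goals have hi := fun i => Set.ext_iff.1 he i
    all_goals simp only [Set.mem_ofPred_eq, Set.mem_empty_iff_false, Fin.le_def] at hi
    · exact numSwitches_le_two_s7 g 0 0 fun i h hs => absurd (by simp [hi]) hs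
    · refine numSwitches_le_two_s7 g (l.val - 1) r.val fun i h hs => ?_
      rw [hi, hi] at hs
      rw [Fin.le_def] at hlr
      simp only at hs
      omega
    · refine numSwitches_le_two_s7 g l.val (r.val - 1) fun i h hs => ?_
      rw [hi, hi] at hs
      rw [Fin.lt_def] at hlr
      simp only at hs
      omega

/-- `P` is two-crossing iff the matrix `M_P` (rows = voters, columns =
ordered pairs of distinct candidates, entry 1 iff `c ≻_v c'`) has the circular
consecutive ones property. -/
theorem twoCrossing_iff_c1pCirc_matrix {n m : ℕ}
    (P : Fin n → Fin m → Fin m → Prop) (hP : ∀ v, IsStrictTotalOrder (Fin m) (P v))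
    (M : Fin n → {p : Fin m × Fin m // p.1 ≠ p.2} → Bool)
    (hM : ∀ (v : Fin n) (p : {p : Fin m × Fin m // p.1 ≠ p.2}),
      M v p = true ↔ P v p.val.1 p.val.2) :
    (∃ σ : Equiv.Perm (Fin n), kCrossingWrt 2 P σ) ↔
      (∃ σ : Equiv.Perm (Fin n), C1PcircWrt M σ) := by
  refine exists_congr fun σ => ?_
  simp only [kCrossingWrt, C1PcircWrt, hM, numSwitches_le_two_iff]
  exact ⟨fun h p => h _ _ p.2, fun h c c' hc => h ⟨(c, c'), hc⟩⟩
end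

section
/- For any profile P over a finite candidate set with voters [n], any permutation σ of [n], and any k ≥ 1: P is 2k-crossing with respect to σ if and only if P is k-interval on the circle induced by σ. -/
/-!
For a fixed pair of candidates the claim concerns a single set `S ⊆ Fin n`: it has at most `2 * k`
switches iff it is a union of `k` circular intervals.

A switch of a union is a switch of one of its members, and a circular interval has at most two
switches (`numSwitches_le_two`), so a union of `k` circular intervals has at most `2 * k` switches.

Conversely (`exists_union_of_numSwitches_le`), the case `S = univ` being trivial, induct on `k`
for `S ≠ univ`. If the complement of `S` is an interval, then `S` itself is a circular interval
(`isCircularInterval_of_compl`). Otherwise `S` has a block strictly between two non-members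
`a` and `b`; deleting it removes both switches at its ends and creates none
(`numSwitches_remove_block`), so the induction hypothesis applies to the rest. For `k = 0` a set
without switches that misses a point is empty, so parity never enters the argument.
-/

open scoped Classical

/-- The set of positions counted by `numSwitches`. -/
noncomputable def switchSet {n : ℕ} (g : Fin n → Prop) : Finset (Fin n) :=
  Finset.univ.filter fun i : Fin n => ∃ h : i.val + 1 < n, ¬ (g i ↔ g ⟨i.val + 1, h⟩)

theorem mem_switchSet {n : ℕ} (g : Fin n → Prop) (i : Fin n) :
    i ∈ switchSet g ↔ ∃ h : i.val + 1 < n, ¬ (g i ↔ g ⟨i.val + 1, h⟩) := by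
  simp [switchSet]

theorem numSwitches_le_two_s8 {n : ℕ} {S : Set (Fin n)} (hS : IsCircularInterval S) :
    numSwitches (fun i => i ∈ S) ≤ 2 := by
  change (switchSet (fun i => i ∈ S)).card ≤ 2
  rcases hS with rfl | ⟨l, r, hlr, rfl⟩ | ⟨l, r, hlr, rfl⟩
  · simp [switchSet]
  · -- The truncated `l - 1` is harmless: when `l = 0` there is no switch on the left.
    refine (Finset.card_le_card (t := {⟨l.val - 1, by omega⟩, r}) ?_).trans Finset.card_le_two
    intro i hi
    obtain ⟨h, hi⟩ := (mem_switchSet _ _).1 hi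
    simp only [Set.mem_ofPred_eq, Fin.le_def] at hi
    simp only [Finset.mem_insert, Finset.mem_singleton, Fin.ext_iff]
    omega
  · refine (Finset.card_le_card (t := {l, ⟨r.val - 1, by omega⟩}) ?_).trans Finset.card_le_two
    intro i hi
    obtain ⟨h, hi⟩ := (mem_switchSet _ _).1 hi
    simp only [Set.mem_ofPred_eq, Fin.le_def] at hi
    simp only [Finset.mem_insert, Finset.mem_singleton, Fin.ext_iff]
    omega

theorem numSwitches_iUnion_le {n k : ℕ} (f : Fin k → Set (Fin n))
    (hf : ∀ t, IsCircularInterval (f t)) :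
    numSwitches (fun i => i ∈ ⋃ t, f t) ≤ 2 * k := by
  have hsub : switchSet (fun i => i ∈ ⋃ t, f t) ⊆
      Finset.univ.biUnion fun t => switchSet (fun i => i ∈ f t) := by
    intro i hi
    obtain ⟨h, hi⟩ := (mem_switchSet _ _).1 hi
    simp only [Finset.mem_biUnion, Finset.mem_univ, true_and, mem_switchSet]
    by_contra! hc
    exact hi (by simpa only [Set.mem_iUnion] using exists_congr fun t => hc t h)
  calc (switchSet (fun i => i ∈ ⋃ t, f t)).card
      ≤ _ := Finset.card_le_card hsub
    _ ≤ Finset.card (Finset.univ : Finset (Fin k)) * 2 :=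
        Finset.card_biUnion_le_card_mul _ _ _ fun t _ => numSwitches_le_two_s8 (hf t)
    _ = 2 * k := by simp [mul_comm]

/-- A set whose complement is the interval from `a` to `b` is a circular interval. -/
theorem isCircularInterval_of_compl {n : ℕ} {S : Set (Fin n)} (a b : Fin n) (hab : a ≤ b)
    (hS : ∀ i, i ∈ S ↔ i < a ∨ b < i) : IsCircularInterval S := by
  have ha := a.isLt
  have hb := b.isLt
  rw [Fin.le_def] at hab
  simp only [Fin.lt_def] at hS
  -- The shape of `S` depends on whether `a` is the first and `b` the last position.
  by_cases h0 : a.val = 0 <;> by_cases h1 : b.val + 1 = n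
  · left
    ext i
    simp only [hS, Set.mem_empty_iff_false, iff_false]
    omega
  · right; left
    refine ⟨⟨b.val + 1, by omega⟩, ⟨n - 1, by omega⟩, by rw [Fin.le_def]; dsimp only; omega, ?_⟩
    ext i
    simp only [hS, Set.mem_ofPred_eq, Fin.le_def]
    omega
  · right; left
    refine ⟨⟨0, by omega⟩, ⟨a.val - 1, by omega⟩, by rw [Fin.le_def]; dsimp only; omega, ?_⟩
    ext i
    simp only [hS, Set.mem_ofPred_eq, Fin.le_def]
    omega
  · right; right
    refine ⟨⟨a.val - 1, by omega⟩, ⟨b.val + 1, by omega⟩, by rw [Fin.lt_def]; dsimp only; omega, ?_⟩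
    ext i
    simp only [hS, Set.mem_ofPred_eq, Fin.le_def]
    omega

/-- Deleting a nonempty block of `S` strictly between two non-members `a` and `b` removes the
switches at `a` and at `b - 1`, and creates no new ones. -/
theorem numSwitches_remove_block {n : ℕ} {S : Set (Fin n)} {a b : Fin n}
    (ha : a ∉ S) (hb : b ∉ S) (hab : a.val + 1 < b.val)
    (hblock : ∀ i, a < i → i < b → i ∈ S) :
    numSwitches (fun i => i ∈ {i | i ∈ S ∧ (i < a ∨ b < i)}) + 2
      ≤ numSwitches (fun i => i ∈ S) := by
  change (switchSet _).card + 2 ≤ (switchSet _).card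
  have hbn := b.isLt
  set b' : Fin n := ⟨b.val - 1, by omega⟩ with hb'
  have hb'v : b'.val = b.val - 1 := rfl
  have hne : a ≠ b' := by
    rw [Ne, Fin.ext_iff]
    omega
  have hpair : ({a, b'} : Finset (Fin n)).card = 2 := Finset.card_pair hne
  rw [← hpair, ← Finset.card_union_of_disjoint]
  · refine Finset.card_le_card fun i hi => ?_
    rcases Finset.mem_union.1 hi with hi | hi
    · obtain ⟨h, hi⟩ := (mem_switchSet _ _).1 hi
      refine (mem_switchSet _ _).2 ⟨h, fun hiff => hi ?_⟩
      simp only [Set.mem_ofPred_eq, hiff, Fin.lt_def]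
      refine and_congr_right fun hmem => ?_
      have h1 : i.val + 1 ≠ a.val := fun e => ha ((Fin.ext e : (⟨i.val + 1, h⟩ : Fin n) = a) ▸ hmem)
      have h2 : i.val ≠ b.val := fun e => hb ((Fin.ext e : i = b) ▸ hiff.2 hmem)
      have h3 : i.val ≠ a.val := fun e => ha ((Fin.ext e : i = a) ▸ hiff.2 hmem)
      have h4 : i.val + 1 ≠ b.val := fun e => hb ((Fin.ext e : (⟨i.val + 1, h⟩ : Fin n) = b) ▸ hmem)
      omega
    · rcases Finset.mem_insert.1 hi with rfl | hi
      · refine (mem_switchSet _ _).2 ⟨by omega, fun hiff => ha (hiff.2 (hblock _ ?_ ?_))⟩ <;>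
          rw [Fin.lt_def] <;> dsimp only <;> omega
      · rw [Finset.mem_singleton.1 hi]
        have hsucc : b'.val + 1 = b.val := by omega
        refine (mem_switchSet _ _).2 ⟨by omega, fun hiff => hb ?_⟩
        have hmem := hiff.1 (hblock b' (by rw [Fin.lt_def]; omega) (by rw [Fin.lt_def]; omega))
        exact (Fin.ext hsucc : (⟨b'.val + 1, by omega⟩ : Fin n) = b) ▸ hmem
  · rw [Finset.disjoint_right]
    intro i hi hsw
    obtain ⟨h, hsw⟩ := (mem_switchSet _ _).1 hsw
    have hi : i.val = a.val ∨ i.val + 1 = b.val := by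
      rcases Finset.mem_insert.1 hi with rfl | hi
      · exact Or.inl rfl
      · rw [Finset.mem_singleton.1 hi]
        omega
    apply hsw
    simp only [Set.mem_ofPred_eq, Fin.lt_def]
    constructor <;> rintro ⟨-, _⟩ <;> omega

/-- A set without switches that misses a point is empty. -/
theorem eq_empty_of_numSwitches_eq_zero {n : ℕ} {S : Set (Fin n)}
    (h : numSwitches (fun i => i ∈ S) = 0) (hS : S ≠ Set.univ) : S = ∅ := by
  have hstep : ∀ (i : ℕ) (hi : i + 1 < n),
      ((⟨i, by omega⟩ : Fin n) ∈ S ↔ (⟨i + 1, hi⟩ : Fin n) ∈ S) := by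
    intro i hi
    by_contra hc
    have hmem : (⟨i, by omega⟩ : Fin n) ∈ switchSet (fun i => i ∈ S) :=
      (mem_switchSet _ _).2 ⟨hi, hc⟩
    have hpos : 0 < (switchSet (fun i => i ∈ S)).card := Finset.card_pos.2 ⟨_, hmem⟩
    exact hpos.ne' h
  have hconst : ∀ (i : ℕ) (hi : i < n),
      ((⟨0, by omega⟩ : Fin n) ∈ S ↔ (⟨i, hi⟩ : Fin n) ∈ S) := by
    intro i
    induction i with
    | zero => intro _; rfl
    | succ i ih => intro hi; exact (ih (by omega)).trans (hstep i hi)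
  obtain ⟨x, hx⟩ := (Set.ne_univ_iff_exists_notMem S).1 hS
  refine Set.eq_empty_iff_forall_notMem.2 fun y hy => hx ?_
  exact (hconst x.val x.isLt).1 ((hconst y.val y.isLt).2 hy)

/-- A set different from `univ` whose complement is not an interval contains a nonempty block
delimited by two non-members; otherwise it is a circular interval. -/
theorem isCircularInterval_or_exists_block {n : ℕ} {S : Set (Fin n)} (hS : S ≠ Set.univ) :
    IsCircularInterval S ∨ ∃ a b : Fin n, a ∉ S ∧ b ∉ S ∧ a.val + 1 < b.val ∧
      ∀ i, a < i → i < b → i ∈ S := by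
  by_cases hx : ∃ x ∈ S, (∃ a < x, a ∉ S) ∧ ∃ b > x, b ∉ S
  · right
    obtain ⟨x, hxS, ⟨a₀, ha₀, ha₀S⟩, b₀, hb₀, hb₀S⟩ := hx
    -- The nearest non-members on either side of `x` delimit the block containing `x`.
    obtain ⟨a, ⟨hax, haS⟩, hamax⟩ := Set.exists_max_image {a | a < x ∧ a ∉ S} id
      (Set.toFinite _) ⟨a₀, ha₀, ha₀S⟩
    obtain ⟨b, ⟨hbx, hbS⟩, hbmin⟩ := Set.exists_min_image {b | x < b ∧ b ∉ S} id
      (Set.toFinite _) ⟨b₀, hb₀, hb₀S⟩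
    refine ⟨a, b, haS, hbS, ?_, fun i hai hib => ?_⟩
    · rw [Fin.lt_def] at hax hbx
      omega
    · by_contra hi
      rcases lt_trichotomy i x with hix | rfl | hix
      · exact absurd (hamax i ⟨hix, hi⟩) (not_le.2 hai)
      · exact hi hxS
      · exact absurd (hbmin i ⟨hix, hi⟩) (not_le.2 hib)
  · left
    push Not at hx
    have hne : (Sᶜ).Nonempty := Set.nonempty_compl.2 hS
    obtain ⟨a, haS, hamin⟩ := Set.exists_min_image Sᶜ id (Set.toFinite _) hne
    obtain ⟨b, hbS, hbmax⟩ := Set.exists_max_image Sᶜ id (Set.toFinite _) hne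
    refine isCircularInterval_of_compl a b (hamin b hbS) fun i => ⟨fun hi => ?_, fun hi => ?_⟩
    · by_contra! hc
      have hai : a < i := lt_of_le_of_ne hc.1 fun e => haS (e ▸ hi)
      have hib : i < b := lt_of_le_of_ne hc.2 fun e => hbS (e ▸ hi)
      exact hbS (hx i hi ⟨a, hai, haS⟩ b hib)
    · by_contra hiS
      rcases hi with hi | hi
      · exact absurd (hamin i hiS) (not_le.2 hi)
      · exact absurd (hbmax i hiS) (not_le.2 hi)

theorem exists_union_of_numSwitches_le {n : ℕ} (k : ℕ) :
    ∀ S : Set (Fin n), S ≠ Set.univ → numSwitches (fun i => i ∈ S) ≤ 2 * k →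
      IsKCircularIntervalUnion k S := by
  induction k with
  | zero =>
    intro S hS h
    refine ⟨fun _ => ∅, fun _ => Or.inl rfl, ?_⟩
    rw [eq_empty_of_numSwitches_eq_zero (by omega) hS]
    simp
  | succ k ih =>
    intro S hS h
    rcases isCircularInterval_or_exists_block hS with hc | ⟨a, b, ha, hb, hab, hblock⟩
    · refine ⟨fun _ => S, fun _ => hc, ?_⟩
      rw [Set.iUnion_const]
    · have hcount := numSwitches_remove_block ha hb hab hblock
      obtain ⟨f, hf, hfS⟩ := ih {i | i ∈ S ∧ (i < a ∨ b < i)}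
        (fun e => ha ((Set.ext_iff.1 e a).2 trivial).1) (by omega)
      have hbn := b.isLt
      refine ⟨Fin.cons {i | (⟨a.val + 1, by omega⟩ : Fin n) ≤ i ∧ i ≤ ⟨b.val - 1, by omega⟩} f,
        fun t => ?_, ?_⟩
      · refine Fin.cases ?_ (fun t => by simpa using hf t) t
        rw [Fin.cons_zero]
        exact Or.inr (Or.inl ⟨_, _, by rw [Fin.le_def]; dsimp only; omega, rfl⟩)
      · ext i
        have hfi : (∃ t, i ∈ f t) ↔ i ∈ S ∧ (i < a ∨ b < i) := by
          rw [← Set.mem_iUnion, ← hfS, Set.mem_ofPred_eq]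
        rw [Set.mem_iUnion, Fin.exists_fin_succ]
        simp only [Fin.cons_zero, Fin.cons_succ, hfi, Set.mem_ofPred_eq]
        have hia : i ∈ S → i.val ≠ a.val := fun hi e => ha (Fin.ext e ▸ hi)
        have hib : i ∈ S → i.val ≠ b.val := fun hi e => hb (Fin.ext e ▸ hi)
        have hbl := hblock i
        simp only [Fin.lt_def, Fin.le_def] at hbl ⊢
        constructor
        · intro hi
          have := hia hi
          have := hib hi
          by_cases h1 : a.val + 1 ≤ i.val ∧ i.val ≤ b.val - 1
          · exact Or.inl h1
          · exact Or.inr ⟨hi, by omega⟩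
        · rintro (h1 | h1)
          · exact hbl (by omega) (by omega)
          · exact h1.1

/-- The full set is a circular interval, including the degenerate case `n = 0`, where it is
empty. -/
theorem isCircularInterval_univ (n : ℕ) : IsCircularInterval (Set.univ : Set (Fin n)) := by
  cases n with
  | zero => exact Or.inl (Set.eq_empty_of_isEmpty _)
  | succ n =>
    refine Or.inr (Or.inl ⟨0, Fin.last n, Fin.zero_le _, ?_⟩)
    ext i
    simp [Fin.le_last]

/-- For any profile `P`, permutation `σ` and `k ≥ 1`:
`P` is `2k`-crossing w.r.t. `σ` iff `P` is `k`-interval on the circle induced by `σ`. -/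
theorem twoKCrossing_iff_kIntervalOnCircle {n : ℕ} {C : Type*} [Fintype C]
    (P : Fin n → C → C → Prop) (hP : ∀ v, IsStrictTotalOrder C (P v))
    (k : ℕ) (hk : 1 ≤ k) (σ : Equiv.Perm (Fin n)) :
    kCrossingWrt (2 * k) P σ ↔ kIntervalOnCircleWrt k P σ := by
  refine forall_congr' fun c => forall_congr' fun c' => forall_congr' fun _ => ?_
  constructor
  · intro h
    by_cases hS : {i : Fin n | P (σ i) c c'} = Set.univ
    · refine ⟨fun _ => Set.univ, fun _ => isCircularInterval_univ n, ?_⟩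
      have : Nonempty (Fin k) := ⟨⟨0, hk⟩⟩
      rw [hS, Set.iUnion_const]
    · exact exists_union_of_numSwitches_le k _ hS h
  · rintro ⟨f, hf, hS⟩
    have h := numSwitches_iUnion_le f hf
    rwa [← hS] at h
end

section
/- Let w : [n] → C be a legal assignment and define the relation a →* b on candidates appearing in w by: a →* b (for a ≠ b, both in the image of w) if and only if some occurrence of b in w lies strictly between the first and the last occurrence of a. Then →* is a strict partial order (irreflexive and transitive), and moreover, if a ≠ b are incomparable under →* then there is no candidate c ∉ {a,b} with both a →* c and b →* c. -/
/-!
In a legal assignment, if one occurrence of `b` lies between two given occurrences of `a ≠ b`, then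
every occurrence of `b` does (`Legal.between`): an outside occurrence would create the forbidden
pattern `a b a b` or `b a b a`. So `a →* b` puts the whole span of `b` inside the span of `a`, and
transitivity is nesting of spans; the pattern `a b a b` also rules out a cycle `a →* b →* a`.
If `a →* c` and `b →* c`, then a single occurrence of `c` lies in the spans of both `a` and `b`, and
whichever of the two spans starts later has its left end inside the other one, so `a` and `b` are
comparable.
-/

open scoped Classical

/-- The relation `a →* b` induced by an assignment `w`: `a ≠ b`, both appear in `w`, and
some occurrence of `b` lies strictly between the first and the last occurrence of `a`. -/
def RelStar {n : ℕ} {C : Type*} (w : Fin n → C) (a b : C) : Prop :=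
  a ≠ b ∧ (∃ i, w i = a) ∧ (∃ i, w i = b) ∧ OccBetween w b a

theorem Legal.between {n : ℕ} {C : Type*} {w : Fin n → C} (hw : Legal w) {i j i' m : Fin n}
    (hii' : w i = w i') (hne : w i ≠ w j) (hij : i < j) (hji' : j < i') (hm : w m = w j) :
    i < m ∧ m < i' := by
  constructor
  · by_contra h
    have hmi : m < i := lt_of_le_of_ne (not_lt.mp h) fun e => hne (e ▸ hm)
    exact hw ⟨w j, w i, m, i, j, i', hne.symm, hmi, hij, hji', hm, rfl, rfl, hii'.symm⟩
  · by_contra h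
    have hmi : i' < m := lt_of_le_of_ne (not_lt.mp h) fun e => hne (hii'.trans (e ▸ hm))
    exact hw ⟨w i, w j, i, j, i', m, hne, hij, hji', hmi, rfl, rfl, hii'.symm, hm⟩

/-- For a legal assignment `w`, the relation `→*` is a strict partial order
(irreflexive and transitive), and no two `→*`-incomparable candidates `a ≠ b` have a common
candidate `c ∉ {a, b}` with `a →* c` and `b →* c`. -/
theorem relStar_strictPartialOrder_of_legal {n : ℕ} {C : Type*}
    (w : Fin n → C) (hw : Legal w) :
    (∀ a : C, ¬ RelStar w a a) ∧
    (∀ a b c : C, RelStar w a b → RelStar w b c → RelStar w a c) ∧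
    (∀ a b : C, a ≠ b → ¬ RelStar w a b → ¬ RelStar w b a →
      ∀ c : C, c ≠ a → c ≠ b → ¬ (RelStar w a c ∧ RelStar w b c)) := by
  refine ⟨fun a h => h.1 rfl, ?_, ?_⟩
  · rintro a b c ⟨hab, ha, -, j, i, i', rfl, rfl, hi', hij, hji'⟩
      ⟨-, -, hc, l, k, k', rfl, hk, hk', hkl, hlk'⟩
    have h₁ := hw.between hi'.symm hab hij hji' hk
    have h₂ := hw.between hi'.symm hab hij hji' hk'
    refine ⟨fun e => ?_, ha, hc, l, i, i', rfl, rfl, hi', h₁.1.trans hkl, hlk'.trans h₂.2⟩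
    exact hw ⟨w i, w j, i, k, l, k', hab, h₁.1, hkl, hlk', rfl, hk, e.symm, hk'⟩
  · rintro a b hab hnab hnba c - -
      ⟨⟨-, ha, -, j, i, i', rfl, rfl, hi', hij, hji'⟩,
        ⟨hbc, hb, -, l, k, k', hl, rfl, hk', hkl, hlk'⟩⟩
    -- The occurrence `j` of `c` lies inside the span of `b` as well.
    have h := hw.between hk'.symm (hl ▸ hbc) hkl hlk' hl.symm
    rcases lt_trichotomy i k with hik | rfl | hki
    · exact hnab ⟨hab, ha, hb, k, i, i', rfl, rfl, hi', hik, h.1.trans hji'⟩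
    · exact hab rfl
    · exact hnba ⟨hab.symm, hb, ha, i, k, k', rfl, rfl, hk', hki, hij.trans h.2⟩
end
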